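/- Let (T,d) be a locally compact, separable metric space. If f_n ∈ ℓ∞_loc(T) hypi-converges to f ∈ ℓ∞_loc(T), if g_n ∈ ℓ∞_loc(T) hypi-converges to g ∈ ℓ∞_loc(T), and if at every point x ∈ T at least one of the two functions f and g is continuous at x, then f_n + g_n hypi-converges to f + g. -/

import Mathlib

open Filter Topology Metric

variable {T : Type*}

/-- Lower semicontinuous hull of a real-valued function on a metric space,
with values in the extended reals. -/
noncomputable def lscHull [MetricSpace T] (f : T → ℝ) (x : T) : EReal :=
  ⨆ (ε : ℝ) (_ : 0 < ε), ⨅ (y : T) (_ : y ∈ Metric.ball x ε), (f y : EReal)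

/-- Upper semicontinuous hull. -/
noncomputable def uscHull [MetricSpace T] (f : T → ℝ) (x : T) : EReal :=
  ⨅ (ε : ℝ) (_ : 0 < ε), ⨆ (y : T) (_ : y ∈ Metric.ball x ε), (f y : EReal)

/-- Locally bounded: bounded on every compact set. -/
def LocBounded [MetricSpace T] (f : T → ℝ) : Prop :=
  ∀ K : Set T, IsCompact K → ∃ M : ℝ, ∀ x ∈ K, |f x| ≤ M

/-- Hypi-convergence of a sequence of functions via the pointwise criteria. -/
def HypiConv [MetricSpace T] (F : ℕ → T → ℝ) (f : T → ℝ) : Prop :=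
  ∀ x : T,
    (∀ u : ℕ → T, Tendsto u atTop (𝓝 x) →
      lscHull f x ≤ liminf (fun n => ((F n (u n) : ℝ) : EReal)) atTop) ∧
    (∃ u : ℕ → T, Tendsto u atTop (𝓝 x) ∧
      limsup (fun n => ((F n (u n) : ℝ) : EReal)) atTop ≤ lscHull f x) ∧
    (∀ u : ℕ → T, Tendsto u atTop (𝓝 x) →
      limsup (fun n => ((F n (u n) : ℝ) : EReal)) atTop ≤ uscHull f x) ∧
    (∃ u : ℕ → T, Tendsto u atTop (𝓝 x) ∧
      uscHull f x ≤ liminf (fun n => ((F n (u n) : ℝ) : EReal)) atTop)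

/-!
Where `f` is continuous its two hulls agree with `f x`, so hypi-convergence forces
`F n (u n) → f x` along every sequence `u n → x`. Adding a sequence with a finite limit shifts
the lower and upper limits of `G n (u n)`, and both hulls of `g` at `x`, by that limit.
Hence the four criteria for `G` at `x`, with the same witnessing sequences, give those for the sum.
-/

section LiminfLimsup

variable {α : Type*} {l : Filter α} [l.NeBot] {u v : α → EReal} {a : ℝ}

lemma liminf_add_of_tendsto_coe (hu : Tendsto u l (𝓝 a)) :
    liminf (fun y => u y + v y) l = a + liminf v l := by
  apply le_antisymm
  · calc liminf (fun y => u y + v y) l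
        ≤ limsup u l + liminf v l :=
          EReal.liminf_add_le (by simp [hu.limsup_eq]) (by simp [hu.limsup_eq])
      _ = a + liminf v l := by rw [hu.limsup_eq]
  · calc a + liminf v l
        = liminf u l + liminf v l := by rw [hu.liminf_eq]
      _ ≤ liminf (fun y => u y + v y) l := EReal.le_liminf_add

lemma limsup_add_of_tendsto_coe (hu : Tendsto u l (𝓝 a)) :
    limsup (fun y => u y + v y) l = a + limsup v l := by
  apply le_antisymm
  · calc limsup (fun y => u y + v y) l
        ≤ limsup u l + limsup v l :=
          EReal.limsup_add_le (by simp [hu.limsup_eq]) (by simp [hu.limsup_eq])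
      _ = a + limsup v l := by rw [hu.limsup_eq]
  · calc a + limsup v l
        = limsup v l + liminf u l := by rw [hu.liminf_eq, add_comm]
      _ ≤ limsup (fun y => v y + u y) l := EReal.le_limsup_add
      _ = limsup (fun y => u y + v y) l := by simp only [add_comm]

end LiminfLimsup

section Hull

variable [MetricSpace T] {f g : T → ℝ} {x : T}

lemma lscHull_eq_liminf (f : T → ℝ) (x : T) :
    lscHull f x = liminf (fun y => (f y : EReal)) (𝓝 x) :=
  nhds_basis_ball.liminf_eq_iSup_iInf.symm

lemma uscHull_eq_limsup (f : T → ℝ) (x : T) :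
    uscHull f x = limsup (fun y => (f y : EReal)) (𝓝 x) :=
  nhds_basis_ball.limsup_eq_iInf_iSup.symm

lemma lscHull_eq_of_continuousAt (hf : ContinuousAt f x) : lscHull f x = f x := by
  rw [lscHull_eq_liminf, (EReal.tendsto_coe.2 hf).liminf_eq]

lemma uscHull_eq_of_continuousAt (hf : ContinuousAt f x) : uscHull f x = f x := by
  rw [uscHull_eq_limsup, (EReal.tendsto_coe.2 hf).limsup_eq]

lemma lscHull_add_of_continuousAt (hf : ContinuousAt f x) :
    lscHull (fun y => f y + g y) x = f x + lscHull g x := by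
  simp only [lscHull_eq_liminf, EReal.coe_add]
  exact liminf_add_of_tendsto_coe (EReal.tendsto_coe.2 hf)

lemma uscHull_add_of_continuousAt (hf : ContinuousAt f x) :
    uscHull (fun y => f y + g y) x = f x + uscHull g x := by
  simp only [uscHull_eq_limsup, EReal.coe_add]
  exact limsup_add_of_tendsto_coe (EReal.tendsto_coe.2 hf)

end Hull

/-- Hypi-convergence of `F` to `f` at the single point `x`: the four criteria of `HypiConv`, named.
It localizes `HypiConv`, so that the continuous summand may vary from point to point. -/
structure HypiConvAt [MetricSpace T] (F : ℕ → T → ℝ) (f : T → ℝ) (x : T) : Prop where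
  lscHull_le_liminf : ∀ u : ℕ → T, Tendsto u atTop (𝓝 x) →
    lscHull f x ≤ liminf (fun n => (F n (u n) : EReal)) atTop
  exists_limsup_le_lscHull : ∃ u : ℕ → T, Tendsto u atTop (𝓝 x) ∧
    limsup (fun n => (F n (u n) : EReal)) atTop ≤ lscHull f x
  limsup_le_uscHull : ∀ u : ℕ → T, Tendsto u atTop (𝓝 x) →
    limsup (fun n => (F n (u n) : EReal)) atTop ≤ uscHull f x
  exists_uscHull_le_liminf : ∃ u : ℕ → T, Tendsto u atTop (𝓝 x) ∧
    uscHull f x ≤ liminf (fun n => (F n (u n) : EReal)) atTop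

section HypiConvergence

variable [MetricSpace T] {F G : ℕ → T → ℝ} {f g : T → ℝ} {x : T}

lemma hypiConv_iff_forall_hypiConvAt : HypiConv F f ↔ ∀ x, HypiConvAt F f x :=
  forall_congr' fun _ =>
    ⟨fun ⟨h₁, h₂, h₃, h₄⟩ => ⟨h₁, h₂, h₃, h₄⟩, fun ⟨h₁, h₂, h₃, h₄⟩ => ⟨h₁, h₂, h₃, h₄⟩⟩

namespace HypiConvAt

lemma tendsto_of_continuousAt (hF : HypiConvAt F f x) (hf : ContinuousAt f x) {u : ℕ → T}
    (hu : Tendsto u atTop (𝓝 x)) :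
    Tendsto (fun n => (F n (u n) : EReal)) atTop (𝓝 (f x)) :=
  tendsto_of_le_liminf_of_limsup_le
    (lscHull_eq_of_continuousAt hf ▸ hF.lscHull_le_liminf u hu)
    (uscHull_eq_of_continuousAt hf ▸ hF.limsup_le_uscHull u hu)

lemma add_of_continuousAt (hF : HypiConvAt F f x) (hG : HypiConvAt G g x)
    (hf : ContinuousAt f x) :
    HypiConvAt (fun n y => F n y + G n y) (fun y => f y + g y) x := by
  have liminf_add {u : ℕ → T} (hu : Tendsto u atTop (𝓝 x)) :
      liminf (fun n => ((F n (u n) + G n (u n) : ℝ) : EReal)) atTop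
        = f x + liminf (fun n => (G n (u n) : EReal)) atTop := by
    simp only [EReal.coe_add]
    exact liminf_add_of_tendsto_coe (hF.tendsto_of_continuousAt hf hu)
  have limsup_add {u : ℕ → T} (hu : Tendsto u atTop (𝓝 x)) :
      limsup (fun n => ((F n (u n) + G n (u n) : ℝ) : EReal)) atTop
        = f x + limsup (fun n => (G n (u n) : EReal)) atTop := by
    simp only [EReal.coe_add]
    exact limsup_add_of_tendsto_coe (hF.tendsto_of_continuousAt hf hu)
  obtain ⟨v, hv, hGv⟩ := hG.exists_limsup_le_lscHull
  obtain ⟨w, hw, hGw⟩ := hG.exists_uscHull_le_liminf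
  constructor
  · intro u hu
    rw [lscHull_add_of_continuousAt hf, liminf_add hu]
    gcongr
    exact hG.lscHull_le_liminf u hu
  · refine ⟨v, hv, ?_⟩
    rw [lscHull_add_of_continuousAt hf, limsup_add hv]
    gcongr
  · intro u hu
    rw [uscHull_add_of_continuousAt hf, limsup_add hu]
    gcongr
    exact hG.limsup_le_uscHull u hu
  · refine ⟨w, hw, ?_⟩
    rw [uscHull_add_of_continuousAt hf, liminf_add hw]
    gcongr

end HypiConvAt

end HypiConvergence

theorem stmt7_general [MetricSpace T] {F G : ℕ → T → ℝ} {f g : T → ℝ}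
    (hFf : HypiConv F f) (hGg : HypiConv G g)
    (hcont : ∀ x : T, ContinuousAt f x ∨ ContinuousAt g x) :
    HypiConv (fun n y => F n y + G n y) (fun y => f y + g y) := by
  rw [hypiConv_iff_forall_hypiConvAt] at hFf hGg ⊢
  intro x
  rcases hcont x with hf | hg
  · exact (hFf x).add_of_continuousAt (hGg x) hf
  · simpa only [add_comm] using (hGg x).add_of_continuousAt (hFf x) hg

/-- STATEMENT 7 (Hypi-convergence of sums): if `f_n` hypi-converges to `f`, `g_n`
hypi-converges to `g`, and at every point at least one of `f`, `g` is continuous,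
then `f_n + g_n` hypi-converges to `f + g`. -/
theorem stmt7 [MetricSpace T] [LocallyCompactSpace T] [TopologicalSpace.SeparableSpace T]
    (F G : ℕ → T → ℝ) (f g : T → ℝ)
    (hF : ∀ n, LocBounded (F n)) (hG : ∀ n, LocBounded (G n))
    (hf : LocBounded f) (hg : LocBounded g)
    (hFf : HypiConv F f) (hGg : HypiConv G g)
    (hcont : ∀ x : T, ContinuousAt f x ∨ ContinuousAt g x) :
    HypiConv (fun n y => F n y + G n y) (fun y => f y + g y) :=
  stmt7_general hFf hGg hcont
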